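/- Let Q_{m,n} be the set of full flags (L_1 ⊂ L_2 ⊂ ⋯ ⊂ L_{m+2n}) of subspaces of V with dim L_i = i, z(L_i) ⊆ L_{i−1} for all i (convention L_0 = 0), and P(L_{m+2n}) = W. Let F be the set of pairs (x, (V_1 ⊂ ⋯ ⊂ V_{m+2n})) where x ∈ S′_{m,n} is nilpotent and (V_i) is a full flag of subspaces of W with dim V_i = i and x(V_i) ⊆ V_{i−1} for all i. Then the map α sending (L_1, …, L_{m+2n}) ∈ Q_{m,n} to (P ∘ z ∘ (P|_{L_{m+2n}})^{-1}, (P(L_1), P(L_2), …, P(L_{m+2n}))) is a well-defined bijection from Q_{m,n} onto F. -/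

import Mathlib

open scoped BigOperators

/-- The coordinate shift: `(shiftMap v) i = v (i+1)`, with the last coordinate sent to `0`. -/
def shiftMap (k : Type*) [Field k] (N : ℕ) : (Fin N → k) →ₗ[k] (Fin N → k) where
  toFun v i := if h : (i : ℕ) + 1 < N then v ⟨(i : ℕ) + 1, h⟩ else 0
  map_add' u v := by funext i; split <;> rename_i h <;> simp [h]
  map_smul' c v := by funext i; split <;> rename_i h <;> simp [h]

/-- The ambient `2(m+2n)`-dimensional space `V`: the first factor holds the coordinates in the
basis `e₁, …, e_{m+2n}`, the second factor those in `f₁, …, f_{m+2n}` (0-indexed). -/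
abbrev VV (k : Type*) [Field k] (m n : ℕ) := (Fin (m + 2*n) → k) × (Fin (m + 2*n) → k)

/-- The nilpotent `z : V → V`, `z eᵢ = eᵢ₋₁`, `z fᵢ = fᵢ₋₁` (with `e₀ = f₀ = 0`). -/
def zmap (k : Type*) [Field k] (m n : ℕ) : VV k m n →ₗ[k] VV k m n :=
  (shiftMap k (m + 2*n)).prodMap (shiftMap k (m + 2*n))

/-- The space `W = span(e₁, …, e_{m+n}, f₁, …, f_n)`, with coordinates indexed by
`Fin (m+2n)`: index `u < m+n` corresponds to `e_{u+1}`, index `u ≥ m+n` to `f_{u-(m+n)+1}`. -/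
abbrev Wt (k : Type*) [Field k] (m n : ℕ) := Fin (m + 2*n) → k

/-- The projection `P : V → W` with `P eᵢ = eᵢ` for `i ≤ m+n`, `P eᵢ = 0` otherwise,
`P fⱼ = fⱼ` for `j ≤ n`, `P fⱼ = 0` otherwise. -/
def Pmap (k : Type*) [Field k] (m n : ℕ) : VV k m n →ₗ[k] Wt k m n where
  toFun v i :=
    if (i : ℕ) < m + n then v.1 i else v.2 ⟨(i : ℕ) - (m + n), by have := i.isLt; omega⟩
  map_add' u v := by funext i; split <;> rename_i h <;> simp [h]
  map_smul' c v := by funext i; split <;> rename_i h <;> simp [h]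

/-- Membership in the slice `S′_{m,n}`: viewing `x` as a matrix in the ordered basis
`e₁, …, e_{m+n}, f₁, …, f_n` of `W`, there are scalars `a, c` (indexed by the `e`-columns)
and `b, d` (indexed by the `f`-columns) with
`x eᵢ = eᵢ₋₁ + aᵢ e_{m+n} + cᵢ f_n` (for `1 ≤ i ≤ m+n`) and
`x fⱼ = fⱼ₋₁ + bⱼ e_{m+n} + dⱼ f_n` (for `1 ≤ j ≤ n`), with `e₀ = f₀ = 0`. -/
def MemS' {k : Type*} [Field k] {m n : ℕ} (hn : 1 ≤ n)
    (x : Matrix (Fin (m + 2*n)) (Fin (m + 2*n)) k) : Prop :=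
  ∃ (a c : Fin (m + n) → k) (b d : Fin n → k),
    ∀ v : Fin (m + 2*n),
      x.mulVec (Pi.single v 1) =
        (if 1 ≤ (v : ℕ) ∧ (v : ℕ) ≠ m + n then
          (Pi.single (⟨(v : ℕ) - 1, by have := v.isLt; omega⟩ : Fin (m + 2*n)) 1 : Wt k m n)
         else 0)
        + (if h : (v : ℕ) < m + n then a ⟨(v : ℕ), h⟩
            else b ⟨(v : ℕ) - (m + n), by have := v.isLt; omega⟩) •
            (Pi.single (⟨m + n - 1, by omega⟩ : Fin (m + 2*n)) 1 : Wt k m n)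
        + (if h : (v : ℕ) < m + n then c ⟨(v : ℕ), h⟩
            else d ⟨(v : ℕ) - (m + n), by have := v.isLt; omega⟩) •
            (Pi.single (⟨m + 2*n - 1, by omega⟩ : Fin (m + 2*n)) 1 : Wt k m n)


/-- Membership in `Q_{m,n}`: a full flag `(L₁ ⊂ ⋯ ⊂ L_{m+2n})` in `V` (0-indexed:
`Lf i = L_{i+1}`) with `dim Lᵢ = i`, `z(Lᵢ) ⊆ L_{i-1}` (and `z(L₁) = 0`), and
`P(L_{m+2n}) = W`. -/
def IsQFlag {k : Type*} [Field k] {m n : ℕ} (hn : 1 ≤ n)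
    (Lf : Fin (m + 2*n) → Submodule k (VV k m n)) : Prop :=
  (∀ i : Fin (m + 2*n), Module.finrank k (Lf i) = (i : ℕ) + 1) ∧
  (∀ i j : Fin (m + 2*n), i ≤ j → Lf i ≤ Lf j) ∧
  (∀ i : Fin (m + 2*n), ∀ v ∈ Lf i,
    if 1 ≤ (i : ℕ) then zmap k m n v ∈ Lf ⟨(i : ℕ) - 1, by have := i.isLt; omega⟩
    else zmap k m n v = 0) ∧
  Submodule.map (Pmap k m n) (Lf ⟨m + 2*n - 1, by omega⟩) = ⊤

/-- Membership in the fibre product `F`: a nilpotent `x ∈ S′_{m,n}` together with a full flag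
`(V₁ ⊂ ⋯ ⊂ V_{m+2n})` in `W` (0-indexed: `Vf i = V_{i+1}`) with `dim Vᵢ = i` and
`x(Vᵢ) ⊆ V_{i-1}` (and `x(V₁) = 0`). -/
def IsFFlag {k : Type*} [Field k] {m n : ℕ} (hn : 1 ≤ n)
    (x : Matrix (Fin (m + 2*n)) (Fin (m + 2*n)) k)
    (Vf : Fin (m + 2*n) → Submodule k (Wt k m n)) : Prop :=
  MemS' hn x ∧ IsNilpotent x ∧
  (∀ i : Fin (m + 2*n), Module.finrank k (Vf i) = (i : ℕ) + 1) ∧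
  (∀ i j : Fin (m + 2*n), i ≤ j → Vf i ≤ Vf j) ∧
  (∀ i : Fin (m + 2*n), ∀ v ∈ Vf i,
    if 1 ≤ (i : ℕ) then x.mulVec v ∈ Vf ⟨(i : ℕ) - 1, by have := i.isLt; omega⟩
    else x.mulVec v = 0)

/-!
Since `P` is injective on `L_{m+2n}`, it carries the flag `L`, and `z` acting on it, to the flag
`P(L)` in `W` and an endomorphism `x` of `W`. Because `P z` shifts all the coordinates of `P` except
those of `e_{m+n}` and `f_n`, such an `x` lies in `S'`.

To go back, note that `V ≅ (k[z]/z^N)²` is cofree over `k[z]/z^N`: a vector of `V` is determined by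
the `e₁`- and `f₁`-coordinates of its orbit under `z`. Hence the only map `W → V` that intertwines
`x` with `z` and preserves these two coordinates sends `w` to the `e₁`- and `f₁`-coordinates of
`w, x w, x² w, …`; it is a section of `P` as soon as `x ∈ S'`, and its image is `L_{m+2n}`.
-/

section LinearMap

variable {R M M' : Type*} [Semiring R] [AddCommMonoid M] [Module R M] [AddCommMonoid M']
  [Module R M']

lemma map_map_eq_of_leftInvOn {f : M →ₗ[R] M'} {g : M' →ₗ[R] M} {L : Submodule R M}
    (h : Set.LeftInvOn g f L) : (L.map f).map g = L :=
  SetLike.coe_injective (by simp only [Submodule.map_coe, h.image_image])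

lemma finrank_map_of_injOn {f : M →ₗ[R] M'} {L : Submodule R M} (hf : Set.InjOn f L) :
    Module.finrank R (L.map f) = Module.finrank R L := by
  rw [← LinearMap.range_domRestrict]
  exact LinearMap.finrank_range_of_inj hf.injective

lemma apply_pow_of_intertwines {T : Module.End R M} {T' : Module.End R M'} {f : M →ₗ[R] M'}
    {L : Submodule R M} (hT : ∀ v ∈ L, T v ∈ L) (hf : ∀ v ∈ L, f (T v) = T' (f v)) (i : ℕ)
    {v : M} (hv : v ∈ L) : f ((T ^ i) v) = (T' ^ i) (f v) := by
  induction i generalizing v with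
  | zero => rfl
  | succ i ih => rw [pow_succ, pow_succ, Module.End.mul_apply, Module.End.mul_apply,
      ih (hT v hv), hf v hv]

end LinearMap

section VectorSpace

variable {k M M' W : Type*} [DivisionRing k] [AddCommGroup M] [Module k M] [AddCommGroup M']
  [Module k M'] [AddCommGroup W] [Module k W]

lemma injOn_of_map_eq_top {f : M →ₗ[k] M'} {L : Submodule k M} [FiniteDimensional k L]
    [FiniteDimensional k M'] (hL : Module.finrank k L = Module.finrank k M') (htop : L.map f = ⊤) :
    Set.InjOn f L := by
  rw [Set.injOn_iff_injective]
  refine (LinearMap.injective_iff_surjective_of_finrank_eq_finrank (f := f.domRestrict L) hL).2 ?_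
  rw [← LinearMap.range_eq_top, LinearMap.range_domRestrict, htop]

lemma exists_factor_of_injOn {f : M →ₗ[k] M'} {L : Submodule k M} (hf : Set.InjOn f L)
    (g : M →ₗ[k] W) : ∃ y : M' →ₗ[k] W, ∀ v ∈ L, g v = y (f v) := by
  obtain ⟨s, hs⟩ := (f.domRestrict L).exists_leftInverse_of_injective
    (LinearMap.ker_eq_bot.2 hf.injective)
  refine ⟨g ∘ₗ L.subtype ∘ₗ s, fun v hv => ?_⟩
  have hsv : s (f v) = ⟨v, hv⟩ := LinearMap.congr_fun hs ⟨v, hv⟩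
  simp only [LinearMap.comp_apply, hsv, Submodule.subtype_apply]

end VectorSpace

section LoweredFlag

variable {k M M' : Type*} [DivisionRing k] [AddCommGroup M] [Module k M] [AddCommGroup M']
  [Module k M'] {N : ℕ}

/-- The predecessor `U_{i-1}` of the `i`-th member of a flag `U`, with the convention `U_{-1} = 0`
for the 0-indexed `U`. -/
def flagPred (U : Fin N → Submodule k M) (i : Fin N) : Submodule k M :=
  if 1 ≤ (i : ℕ) then U ⟨(i : ℕ) - 1, by omega⟩ else ⊥

/-- `U` is a flag with members of dimensions `1, …, N`, and the endomorphism `T` sends each member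
into the preceding one. When `N = dim M`, this says that `U` is a point of the Springer fibre of
`T`. -/
structure IsLoweredFlag (T : Module.End k M) (U : Fin N → Submodule k M) : Prop where
  finrank_eq : ∀ i, Module.finrank k (U i) = (i : ℕ) + 1
  mono : Monotone U
  apply_mem : ∀ i, ∀ v ∈ U i, T v ∈ flagPred U i

lemma mem_flagPred {U : Fin N → Submodule k M} {i : Fin N} {v : M} :
    v ∈ flagPred U i ↔ if 1 ≤ (i : ℕ) then v ∈ U ⟨(i : ℕ) - 1, by omega⟩ else v = 0 := by
  unfold flagPred
  split_ifs
  · rfl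
  · exact Submodule.mem_bot k

lemma flagPred_map (f : M →ₗ[k] M') (U : Fin N → Submodule k M) (i : Fin N) :
    flagPred (fun j => (U j).map f) i = (flagPred U i).map f := by
  unfold flagPred
  split_ifs
  · rfl
  · exact (Submodule.map_bot f).symm

namespace IsLoweredFlag

variable {T : Module.End k M} {T' : Module.End k M'} {U : Fin N → Submodule k M}

lemma le_last (h : IsLoweredFlag T U) (i : Fin N) :
    U i ≤ U ⟨N - 1, Nat.sub_one_lt_of_lt i.isLt⟩ :=
  h.mono (Fin.le_def.2 (Nat.le_sub_one_of_lt i.isLt))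

lemma flagPred_le (h : IsLoweredFlag T U) (i : Fin N) : flagPred U i ≤ U i := by
  unfold flagPred
  split_ifs
  · exact h.mono (Fin.le_def.2 (Nat.sub_le _ _))
  · exact bot_le

lemma apply_mem_self (h : IsLoweredFlag T U) (i : Fin N) {v : M} (hv : v ∈ U i) : T v ∈ U i :=
  h.flagPred_le i (h.apply_mem i v hv)

lemma pow_apply_eq_zero (h : IsLoweredFlag T U) {i : ℕ} (hi : i < N) {v : M}
    (hv : v ∈ U ⟨i, hi⟩) : (T ^ (i + 1)) v = 0 := by
  induction i generalizing v with
  | zero => simpa [mem_flagPred] using h.apply_mem _ v hv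
  | succ i ih =>
    rw [pow_succ, Module.End.mul_apply]
    exact ih (by omega) (by simpa [mem_flagPred] using h.apply_mem _ v hv)

lemma last_eq_top (h : IsLoweredFlag T U) (hM : Module.finrank k M = N) (hN : 0 < N) :
    U ⟨N - 1, by omega⟩ = ⊤ := by
  have : FiniteDimensional k M := .of_finrank_pos (hM ▸ hN)
  refine Submodule.eq_top_of_finrank_eq ?_
  rw [h.finrank_eq, hM]
  exact Nat.sub_add_cancel hN

lemma pow_eq_zero (h : IsLoweredFlag T U) (hM : Module.finrank k M = N) (hN : 0 < N) :
    T ^ N = 0 := by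
  refine LinearMap.ext fun v => ?_
  have hv : v ∈ U ⟨N - 1, by omega⟩ := h.last_eq_top hM hN ▸ Submodule.mem_top
  simpa only [Nat.sub_add_cancel hN, LinearMap.zero_apply] using h.pow_apply_eq_zero _ hv

lemma map (h : IsLoweredFlag T U) {f : M →ₗ[k] M'} (hf : ∀ i, Set.InjOn f (U i))
    (hT : ∀ i, ∀ v ∈ U i, f (T v) = T' (f v)) : IsLoweredFlag T' fun i => (U i).map f where
  finrank_eq i := by rw [finrank_map_of_injOn (hf i), h.finrank_eq]
  mono _ _ hij := Submodule.map_mono (h.mono hij)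
  apply_mem i := by
    rintro _ ⟨v, hv, rfl⟩
    rw [flagPred_map, ← hT i v hv]
    exact Submodule.mem_map_of_mem (h.apply_mem i v hv)

end IsLoweredFlag

end LoweredFlag

section Shift

variable {k W : Type*} [Field k] [AddCommGroup W] [Module k W]

lemma shiftMap_pow_apply {N i : ℕ} (v : Fin N → k) {j : Fin N} (h : (j : ℕ) + i < N) :
    (shiftMap k N ^ i) v j = v ⟨(j : ℕ) + i, h⟩ := by
  induction i generalizing v with
  | zero => rfl
  | succ i ih =>
    rw [pow_succ, Module.End.mul_apply, ih _ (by omega)]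
    exact dif_pos h

/-- The map `w ↦ (φ w, φ (T w), φ (T² w), …)` recording the values of the functional `φ` along the
`T`-orbit of `w`. When `T ^ N = 0`, this is the map into the cofree module `k[z]/z^N` that
corresponds to `φ`. -/
def orbitMap (T : Module.End k W) (φ : W →ₗ[k] k) (N : ℕ) : W →ₗ[k] (Fin N → k) :=
  LinearMap.pi fun i => φ ∘ₗ (T ^ (i : ℕ))

lemma orbitMap_apply (T : Module.End k W) (φ : W →ₗ[k] k) {N : ℕ} (w : W) (i : Fin N) :
    orbitMap T φ N w i = φ ((T ^ (i : ℕ)) w) :=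
  rfl

lemma shiftMap_orbitMap {T : Module.End k W} {N : ℕ} (hT : T ^ N = 0) (φ : W →ₗ[k] k) (w : W) :
    shiftMap k N (orbitMap T φ N w) = orbitMap T φ N (T w) := by
  funext i
  rw [orbitMap_apply, ← Module.End.mul_apply, ← pow_succ]
  simp only [shiftMap, LinearMap.coe_mk, AddHom.coe_mk, orbitMap_apply]
  split_ifs with h
  · rfl
  · rw [show (i : ℕ) + 1 = N by omega, hT, LinearMap.zero_apply, map_zero]

end Shift

section Slice

variable {k : Type*} [Field k] {m n : ℕ}

lemma Pmap_apply_zero (hn : 1 ≤ n) (v : VV k m n) :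
    Pmap k m n v ⟨0, by omega⟩ = v.1 ⟨0, by omega⟩ :=
  if_pos (by grind)

lemma Pmap_apply_add (hn : 1 ≤ n) (v : VV k m n) :
    Pmap k m n v ⟨m + n, by omega⟩ = v.2 ⟨0, by omega⟩ :=
  (if_neg (by grind)).trans (by grind)

lemma zmap_pow_apply (i : ℕ) (v : VV k m n) :
    (zmap k m n ^ i) v = ((shiftMap k _ ^ i) v.1, (shiftMap k _ ^ i) v.2) :=
  LinearMap.congr_fun (map_pow (LinearMap.prodMapRingHom k _ _) (_, _) i).symm v

lemma Pmap_zmap_apply (v : VV k m n) {r : Fin (m + 2 * n)} (h : (r : ℕ) + 1 < m + 2 * n)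
    (hr : (r : ℕ) + 1 ≠ m + n) :
    Pmap k m n (zmap k m n v) r = Pmap k m n v ⟨(r : ℕ) + 1, h⟩ := by
  simp only [Pmap, zmap, shiftMap, LinearMap.coe_mk, AddHom.coe_mk, LinearMap.prodMap_apply]
  grind

lemma ite_single_pred_apply (v r : Fin (m + 2 * n)) :
    (if 1 ≤ (v : ℕ) ∧ (v : ℕ) ≠ m + n then
      (Pi.single (⟨(v : ℕ) - 1, by omega⟩ : Fin (m + 2 * n)) 1 : Wt k m n) else 0) r =
    if (v : ℕ) = r + 1 ∧ (v : ℕ) ≠ m + n then 1 else 0 := by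
  rw [ite_apply, Pi.single_apply, Pi.zero_apply, ← ite_and]
  refine if_congr ?_ rfl rfl
  simp only [Fin.ext_iff]
  omega

variable {x : Matrix (Fin (m + 2 * n)) (Fin (m + 2 * n)) k}

lemma MemS'.row_eq_single {hn : 1 ≤ n} (hx : MemS' hn x) {r : Fin (m + 2 * n)}
    (h : (r : ℕ) + 1 < m + 2 * n) (hr : (r : ℕ) + 1 ≠ m + n) :
    x r = Pi.single ⟨(r : ℕ) + 1, h⟩ 1 := by
  obtain ⟨a, c, b, d, hcol⟩ := hx
  funext v
  have hrv := congrFun (hcol v) r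
  rw [Matrix.mulVec_single_one, Pi.add_apply, Pi.add_apply, ite_single_pred_apply] at hrv
  simp only [Matrix.col_apply, Pi.smul_apply, Pi.single_apply, Fin.ext_iff] at hrv ⊢
  rw [hrv, if_neg (show (r : ℕ) ≠ m + n - 1 by omega),
    if_neg (show (r : ℕ) ≠ m + 2 * n - 1 by omega), smul_zero, smul_zero, add_zero, add_zero]
  exact if_congr (by omega) rfl rfl

lemma memS'_of_row_eq_single (hn : 1 ≤ n)
    (hx : ∀ (r : Fin (m + 2 * n)) (h : (r : ℕ) + 1 < m + 2 * n), (r : ℕ) + 1 ≠ m + n →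
      x r = Pi.single ⟨(r : ℕ) + 1, h⟩ 1) : MemS' hn x := by
  refine ⟨fun i => x ⟨m + n - 1, by omega⟩ ⟨i, by omega⟩,
    fun i => x ⟨m + 2 * n - 1, by omega⟩ ⟨i, by omega⟩,
    fun j => x ⟨m + n - 1, by omega⟩ ⟨m + n + j, by omega⟩,
    fun j => x ⟨m + 2 * n - 1, by omega⟩ ⟨m + n + j, by omega⟩, fun v => funext fun r => ?_⟩
  have coeff_eq (s : Fin (m + 2 * n)) : (if h : (v : ℕ) < m + n then x s ⟨(v : ℕ), by omega⟩
      else x s ⟨m + n + ((v : ℕ) - (m + n)), by omega⟩) = x s v := by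
    split_ifs
    · rfl
    · exact congrArg (x s) (Fin.ext (by simp only; omega))
  rw [Matrix.mulVec_single_one, Pi.add_apply, Pi.add_apply, ite_single_pred_apply,
    coeff_eq ⟨m + n - 1, by omega⟩, coeff_eq ⟨m + 2 * n - 1, by omega⟩]
  simp only [Matrix.col_apply, Pi.smul_apply, Pi.single_apply, Fin.ext_iff, smul_eq_mul]
  by_cases he : (r : ℕ) = m + n - 1
  · rw [show (⟨m + n - 1, by omega⟩ : Fin (m + 2 * n)) = r from Fin.ext he.symm, if_pos he,
      if_neg (by omega), if_neg (by omega), zero_add, mul_one, mul_zero, add_zero]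
  · by_cases hf : (r : ℕ) = m + 2 * n - 1
    · rw [show (⟨m + 2 * n - 1, by omega⟩ : Fin (m + 2 * n)) = r from Fin.ext hf.symm, if_pos hf,
        if_neg (by omega), if_neg he, mul_zero, add_zero, zero_add, mul_one]
    · rw [hx r (by omega) (by omega), if_neg he, if_neg hf, mul_zero, mul_zero, add_zero, add_zero,
        Pi.single_apply]
      exact if_congr (by simp only [Fin.ext_iff]; omega) rfl rfl

lemma MemS'.mulVec_apply {hn : 1 ≤ n} (hx : MemS' hn x) (w : Wt k m n) {r : Fin (m + 2 * n)}
    (h : (r : ℕ) + 1 < m + 2 * n) (hr : (r : ℕ) + 1 ≠ m + n) :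
    x.mulVec w r = w ⟨(r : ℕ) + 1, h⟩ := by
  rw [Matrix.mulVec, hx.row_eq_single h hr, single_one_dotProduct]

/-- `x` is the endomorphism of `W` that `P` makes out of `z` on `L`: `P ∘ z = x ∘ P` on `L`. When
`P` maps `L` isomorphically onto `W`, this says `x = P ∘ z ∘ (P|_L)⁻¹`. -/
def Intertwines (x : Matrix (Fin (m + 2 * n)) (Fin (m + 2 * n)) k) (L : Submodule k (VV k m n)) :
    Prop :=
  ∀ v ∈ L, Pmap k m n (zmap k m n v) = x.mulVec (Pmap k m n v)

lemma memS'_of_intertwines (hn : 1 ≤ n) {L : Submodule k (VV k m n)}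
    (htop : L.map (Pmap k m n) = ⊤) (hx : Intertwines x L) : MemS' hn x := by
  refine memS'_of_row_eq_single hn fun r h hr => dotProduct_eq _ _ fun w => ?_
  obtain ⟨v, hv, rfl⟩ : w ∈ L.map (Pmap k m n) := htop ▸ Submodule.mem_top
  rw [single_one_dotProduct, ← Pmap_zmap_apply v h hr, hx v hv]
  rfl

lemma MemS'.pow_apply {hn : 1 ≤ n} (hx : MemS' hn x) {r i : ℕ} (h : r + i < m + 2 * n)
    (hr : m + n ≤ r ∨ r + i < m + n) (w : Wt k m n) :
    (Matrix.toLin' x ^ i) w ⟨r, by omega⟩ = w ⟨r + i, h⟩ := by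
  induction i generalizing w with
  | zero => rfl
  | succ i ih =>
    rw [pow_succ, Module.End.mul_apply, ih (by omega) (by omega), Matrix.toLin'_apply]
    exact hx.mulVec_apply w (r := ⟨r + i, by omega⟩) (by simp only; omega) (by simp only; omega)

/-- The map `W → V` that sends `w` to the `e₁`- and `f₁`-coordinates of its orbit under `x`. For
nilpotent `x` in the slice it is the section `W ≅ L_{m+2n} ⊆ V` of `P` from which the flag `L` is
recovered. -/
def sliceLift (hn : 1 ≤ n) (x : Matrix (Fin (m + 2 * n)) (Fin (m + 2 * n)) k) :
    Wt k m n →ₗ[k] VV k m n :=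
  (orbitMap (Matrix.toLin' x) (LinearMap.proj ⟨0, by omega⟩) (m + 2 * n)).prod
    (orbitMap (Matrix.toLin' x) (LinearMap.proj ⟨m + n, by omega⟩) (m + 2 * n))

lemma Pmap_sliceLift {hn : 1 ≤ n} (hx : MemS' hn x) :
    Function.LeftInverse (Pmap k m n) (sliceLift hn x) := by
  intro w
  funext i
  change (if (i : ℕ) < m + n then (Matrix.toLin' x ^ (i : ℕ)) w ⟨0, by omega⟩
    else (Matrix.toLin' x ^ ((i : ℕ) - (m + n))) w ⟨m + n, by omega⟩) = w i
  split_ifs with hi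
  · rw [hx.pow_apply (by omega) (by omega)]
    exact congrArg w (Fin.ext (Nat.zero_add _))
  · rw [hx.pow_apply (by omega) (by omega)]
    exact congrArg w (Fin.ext (Nat.add_sub_of_le (not_lt.1 hi)))

lemma zmap_sliceLift_of_pow_eq_zero (hn : 1 ≤ n) (hx : Matrix.toLin' x ^ (m + 2 * n) = 0)
    (w : Wt k m n) :
    zmap k m n (sliceLift hn x w) = sliceLift hn x (x.mulVec w) :=
  Prod.ext (shiftMap_orbitMap hx (LinearMap.proj _) w) (shiftMap_orbitMap hx (LinearMap.proj _) w)

lemma sliceLift_Pmap (hn : 1 ≤ n) {L : Submodule k (VV k m n)} (hz : ∀ v ∈ L, zmap k m n v ∈ L)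
    (hx : Intertwines x L) : Set.LeftInvOn (sliceLift hn x) (Pmap k m n) L := by
  intro v hv
  have orbit (i : ℕ) : (Matrix.toLin' x ^ i) (Pmap k m n v) = Pmap k m n ((zmap k m n ^ i) v) :=
    (apply_pow_of_intertwines (T' := Matrix.toLin' x) (f := Pmap k m n) hz hx i hv).symm
  refine Prod.ext (funext fun i => ?_) (funext fun i => ?_)
  · change (Matrix.toLin' x ^ (i : ℕ)) (Pmap k m n v) ⟨0, by omega⟩ = v.1 i
    rw [orbit, Pmap_apply_zero hn, zmap_pow_apply]
    exact (shiftMap_pow_apply v.1 (by simp)).trans (congrArg v.1 (Fin.ext (Nat.zero_add _)))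
  · change (Matrix.toLin' x ^ (i : ℕ)) (Pmap k m n v) ⟨m + n, by omega⟩ = v.2 i
    rw [orbit, Pmap_apply_add hn, zmap_pow_apply]
    exact (shiftMap_pow_apply v.2 (by simp)).trans (congrArg v.2 (Fin.ext (Nat.zero_add _)))

end Slice

section Correspondence

variable {k : Type*} [Field k] {m n : ℕ} {hn : 1 ≤ n}
  {x : Matrix (Fin (m + 2 * n)) (Fin (m + 2 * n)) k}
  {Lf : Fin (m + 2 * n) → Submodule k (VV k m n)} {Vf : Fin (m + 2 * n) → Submodule k (Wt k m n)}

lemma isQFlag_iff : IsQFlag hn Lf ↔ IsLoweredFlag (zmap k m n) Lf ∧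
    (Lf ⟨m + 2 * n - 1, by omega⟩).map (Pmap k m n) = ⊤ := by
  constructor
  · rintro ⟨hdim, hmono, hz, htop⟩
    exact ⟨⟨hdim, hmono, fun i v hv => mem_flagPred.2 (hz i v hv)⟩, htop⟩
  · rintro ⟨⟨hdim, hmono, hz⟩, htop⟩
    exact ⟨hdim, hmono, fun i v hv => mem_flagPred.1 (hz i v hv), htop⟩

lemma isFFlag_iff : IsFFlag hn x Vf ↔ MemS' hn x ∧ IsLoweredFlag (Matrix.toLin' x) Vf := by
  constructor
  · rintro ⟨hS, -, hdim, hmono, hx⟩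
    exact ⟨hS, hdim, hmono, fun i v hv => mem_flagPred.2 (hx i v hv)⟩
  · rintro ⟨hS, hV⟩
    have hpow : x ^ (m + 2 * n) = 0 := by
      rw [← Matrix.toLin'.map_eq_zero_iff, Matrix.toLin'_pow]
      exact hV.pow_eq_zero (Module.finrank_fin_fun k) (by omega)
    exact ⟨hS, ⟨_, hpow⟩, hV.finrank_eq, hV.mono,
      fun i v hv => mem_flagPred.1 (hV.apply_mem i v hv)⟩

lemma IsQFlag.injOn_Pmap (hL : IsQFlag hn Lf) :
    Set.InjOn (Pmap k m n) (Lf ⟨m + 2 * n - 1, by omega⟩) := by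
  obtain ⟨hflag, htop⟩ := isQFlag_iff.1 hL
  refine injOn_of_map_eq_top ?_ htop
  rw [hflag.finrank_eq, Module.finrank_fin_fun]
  exact Nat.sub_add_cancel (by omega)

lemma IsQFlag.exists_intertwines (hL : IsQFlag hn Lf) :
    ∃ x : Matrix (Fin (m + 2 * n)) (Fin (m + 2 * n)) k,
      Intertwines x (Lf ⟨m + 2 * n - 1, by omega⟩) := by
  obtain ⟨y, hy⟩ := exists_factor_of_injOn hL.injOn_Pmap (Pmap k m n ∘ₗ zmap k m n)
  refine ⟨LinearMap.toMatrix' y, fun v hv => ?_⟩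
  rw [LinearMap.toMatrix'_mulVec, ← hy v hv, LinearMap.comp_apply]

lemma eq_of_intertwines {x y : Matrix (Fin (m + 2 * n)) (Fin (m + 2 * n)) k}
    {L : Submodule k (VV k m n)} (htop : L.map (Pmap k m n) = ⊤)
    (hx : Intertwines x L) (hy : Intertwines y L) : x = y := by
  refine Matrix.ext_iff_mulVec.2 fun w => ?_
  obtain ⟨v, hv, rfl⟩ : w ∈ L.map (Pmap k m n) := htop ▸ Submodule.mem_top
  rw [← hx v hv, hy v hv]

lemma IsQFlag.isFFlag_map (hL : IsQFlag hn Lf) (hx : Intertwines x (Lf ⟨m + 2 * n - 1, by omega⟩)) :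
    IsFFlag hn x fun i => (Lf i).map (Pmap k m n) := by
  obtain ⟨hflag, htop⟩ := isQFlag_iff.1 hL
  exact isFFlag_iff.2 ⟨memS'_of_intertwines hn htop hx,
    hflag.map (fun i => hL.injOn_Pmap.mono (hflag.le_last i))
      fun i v hv => hx v (hflag.le_last i hv)⟩

lemma IsQFlag.map_sliceLift_map_Pmap (hL : IsQFlag hn Lf)
    (hx : Intertwines x (Lf ⟨m + 2 * n - 1, by omega⟩)) (i : Fin (m + 2 * n)) :
    ((Lf i).map (Pmap k m n)).map (sliceLift hn x) = Lf i := by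
  obtain ⟨hflag, -⟩ := isQFlag_iff.1 hL
  exact map_map_eq_of_leftInvOn
    ((sliceLift_Pmap hn (fun _ => hflag.apply_mem_self _) hx).mono (hflag.le_last i))

lemma IsFFlag.zmap_sliceLift (hF : IsFFlag hn x Vf) (w : Wt k m n) :
    zmap k m n (sliceLift hn x w) = sliceLift hn x (x.mulVec w) :=
  zmap_sliceLift_of_pow_eq_zero hn
    ((isFFlag_iff.1 hF).2.pow_eq_zero (Module.finrank_fin_fun k) (by omega)) w

lemma IsFFlag.map_Pmap_map_sliceLift (hF : IsFFlag hn x Vf) (i : Fin (m + 2 * n)) :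
    ((Vf i).map (sliceLift hn x)).map (Pmap k m n) = Vf i :=
  map_map_eq_of_leftInvOn ((Pmap_sliceLift hF.1).leftInvOn _)

lemma IsFFlag.isQFlag_map (hF : IsFFlag hn x Vf) :
    IsQFlag hn fun i => (Vf i).map (sliceLift hn x) := by
  obtain ⟨hS, hflag⟩ := isFFlag_iff.1 hF
  refine isQFlag_iff.2 ⟨hflag.map (fun _ => (Pmap_sliceLift hS).injective.injOn)
    fun _ w _ => (hF.zmap_sliceLift w).symm, ?_⟩
  rw [hF.map_Pmap_map_sliceLift, hflag.last_eq_top (Module.finrank_fin_fun k) (by omega)]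

lemma IsFFlag.intertwines (hF : IsFFlag hn x Vf) :
    Intertwines x ((Vf ⟨m + 2 * n - 1, by omega⟩).map (sliceLift hn x)) := by
  rintro _ ⟨w, -, rfl⟩
  rw [hF.zmap_sliceLift, Pmap_sliceLift hF.1, Pmap_sliceLift hF.1]

end Correspondence

/-- **The isomorphism `Q_{m,n} ≅ S′_{m,n} ×_{sl} T*B`** (Lemma `sub` of Nandakumar–Yang):
the map `α` sending a flag `(L₁ ⊂ ⋯ ⊂ L_{m+2n}) ∈ Q_{m,n}` to
`(P ∘ z ∘ (P|_{L_{m+2n}})⁻¹, (P(L₁), …, P(L_{m+2n})))` is a well-defined bijection onto `F`.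
The image `α(Lf)` is characterized by: each member of the image flag is the `P`-image of the
corresponding `Lᵢ`, and `P(z v) = x (P v)` for `v ∈ L_{m+2n}`; the statement asserts that for
each point of `Q_{m,n}` there is a unique such point of `F` (well-definedness), and that each
point of `F` arises this way from a unique point of `Q_{m,n}` (bijectivity). -/
theorem Q_equiv_fibre_product {k : Type*} [Field k] (m n : ℕ) (hn : 1 ≤ n) :
    (∀ Lf : Fin (m + 2*n) → Submodule k (VV k m n), IsQFlag hn Lf →
      ∃! p : Matrix (Fin (m + 2*n)) (Fin (m + 2*n)) k ×
              (Fin (m + 2*n) → Submodule k (Wt k m n)),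
        IsFFlag hn p.1 p.2 ∧
        (∀ i, p.2 i = Submodule.map (Pmap k m n) (Lf i)) ∧
        (∀ v ∈ Lf ⟨m + 2*n - 1, by omega⟩,
          Pmap k m n (zmap k m n v) = p.1.mulVec (Pmap k m n v))) ∧
    (∀ x : Matrix (Fin (m + 2*n)) (Fin (m + 2*n)) k,
      ∀ Vf : Fin (m + 2*n) → Submodule k (Wt k m n), IsFFlag hn x Vf →
      ∃! Lf : Fin (m + 2*n) → Submodule k (VV k m n),
        IsQFlag hn Lf ∧
        (∀ i, Vf i = Submodule.map (Pmap k m n) (Lf i)) ∧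
        (∀ v ∈ Lf ⟨m + 2*n - 1, by omega⟩,
          Pmap k m n (zmap k m n v) = x.mulVec (Pmap k m n v))) := by
  constructor
  · intro Lf hL
    obtain ⟨x, hx⟩ := hL.exists_intertwines
    refine ⟨(x, fun i => (Lf i).map (Pmap k m n)), ⟨hL.isFFlag_map hx, fun _ => rfl, hx⟩, ?_⟩
    rintro ⟨y, Vf⟩ ⟨-, hVf, hy⟩
    exact Prod.ext (eq_of_intertwines (isQFlag_iff.1 hL).2 hy hx) (funext hVf)
  · intro x Vf hF
    refine ⟨fun i => (Vf i).map (sliceLift hn x),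
      ⟨hF.isQFlag_map, fun i => (hF.map_Pmap_map_sliceLift i).symm, hF.intertwines⟩, ?_⟩
    rintro Lf ⟨hL, hVf, hx⟩
    funext i
    rw [hVf i, hL.map_sliceLift_map_Pmap hx i]
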